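/- Suppose K = n and M = ⌈n^α⌉ for a constant 0 < α < 1/2. Then, under the Uniform popularity distribution, with high probability the maximum load L of Strategy I lies in the interval [Ω(log n/log log n), O(log n)]: there exist constants c_1, c_2, c > 0 such that for all sufficiently large n, with probability at least 1 − n^{−c}, c_1·log n/log log n ≤ L ≤ c_2·log n. -/

import Mathlib

open scoped Classical BigOperators
open Filter

/-- Nodes of the `m × m` torus grid (a `√n × √n` grid with wrap-around, `n = m²`). -/
abbrev Node (m : ℕ) := Fin m × Fin m

/-- Wrap-around distance between two coordinates in `Fin m`. -/
def cdist {m : ℕ} (a b : Fin m) : ℕ :=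
  min ((a.val + m - b.val) % m) ((b.val + m - a.val) % m)

/-- Graph (shortest-path) distance on the torus grid. -/
def torusDist {m : ℕ} (u v : Node m) : ℕ := cdist u.1 v.1 + cdist u.2 v.2

/-- A cache placement: each of the `m²` nodes fills `M` cache slots with files from a
library of `K` files.  Under the Uniform popularity distribution the random placement
is uniform over all such functions (each slot i.i.d. uniform on the `K` files). -/
abbrev Placement (m M K : ℕ) := Node m → Fin M → Fin K

/-- Node `u` has cached file `j`. -/
def cached {m M K : ℕ} (ω : Placement m M K) (u : Node m) (j : Fin K) : Prop :=
  ∃ i, ω u i = j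

/-- Probability of an event under the uniform measure on a finite type. -/
noncomputable def unifProb {Ω : Type*} [Fintype Ω] (E : Set Ω) : ℝ :=
  ((Finset.univ.filter (fun ω => ω ∈ E)).card : ℝ) / (Fintype.card Ω : ℝ)

/-- `A` assigns each of the `n'` requests (request `t` originating at node `(ρ t).1`
and asking for file `(ρ t).2`) to a nearest node that cached the requested file;
quantifying over all such `A` covers every random tie-breaking of Strategy I. -/
def validAssign {m M K n' : ℕ} (ω : Placement m M K) (ρ : Fin n' → Node m × Fin K)
    (A : Fin n' → Node m) : Prop :=
  ∀ t, cached ω (A t) (ρ t).2 ∧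
    ∀ v, cached ω v (ρ t).2 → torusDist (ρ t).1 (A t) ≤ torusDist (ρ t).1 v

/-- Maximum load: the maximum over nodes of the number of requests assigned to it. -/
noncomputable def maxLoad {m n' : ℕ} (A : Fin n' → Node m) : ℕ :=
  Finset.univ.sup fun v : Node m => (Finset.univ.filter fun t => A t = v).card

/-- Cache size `M = ⌈n^α⌉`. -/
noncomputable def Mf (α : ℝ) (n : ℕ) : ℕ := ⌈(n : ℝ) ^ α⌉₊

/-! ### Finite probability -/

noncomputable def uE {Ω : Type*} [Fintype Ω] (f : Ω → ℝ) : ℝ :=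
  (∑ x, f x) / (Fintype.card Ω : ℝ)

lemma unifProb_eq {Ω : Type*} [Fintype Ω] (A : Set Ω) :
    unifProb A = uE (fun x => if x ∈ A then (1 : ℝ) else 0) := by
  unfold unifProb uE
  congr 1
  simp [Finset.sum_boole]

lemma uE_mono {Ω : Type*} [Fintype Ω] {f g : Ω → ℝ} (h : ∀ x, f x ≤ g x) : uE f ≤ uE g := by
  unfold uE
  gcongr with x
  exact h x

lemma uE_add {Ω : Type*} [Fintype Ω] (f g : Ω → ℝ) :
    uE (fun x => f x + g x) = uE f + uE g := by
  unfold uE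
  rw [Finset.sum_add_distrib, add_div]

lemma uE_mul_left {Ω : Type*} [Fintype Ω] (c : ℝ) (f : Ω → ℝ) :
    uE (fun x => c * f x) = c * uE f := by
  unfold uE
  rw [← Finset.mul_sum, mul_div_assoc]

lemma uE_mul_right {Ω : Type*} [Fintype Ω] (c : ℝ) (f : Ω → ℝ) :
    uE (fun x => f x * c) = uE f * c := by
  rw [mul_comm, ← uE_mul_left]
  simp only [mul_comm]

lemma uE_sum {Ω ι : Type*} [Fintype Ω] (s : Finset ι) (f : ι → Ω → ℝ) :
    uE (fun x => ∑ i ∈ s, f i x) = ∑ i ∈ s, uE (f i) := by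
  unfold uE
  rw [Finset.sum_comm, Finset.sum_div]

lemma uE_const {Ω : Type*} [Fintype Ω] [Nonempty Ω] (c : ℝ) :
    uE (fun _ : Ω => c) = c := by
  unfold uE
  have : (Fintype.card Ω : ℝ) ≠ 0 := by exact_mod_cast Fintype.card_ne_zero
  simp only [Finset.sum_const, nsmul_eq_mul, Finset.card_univ]
  field_simp

lemma uE_nonneg {Ω : Type*} [Fintype Ω] {f : Ω → ℝ} (h : ∀ x, 0 ≤ f x) : 0 ≤ uE f := by
  unfold uE
  exact div_nonneg (Finset.sum_nonneg fun x _ => h x) (by positivity)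

lemma uE_equiv {Ω Ω' : Type*} [Fintype Ω] [Fintype Ω'] (e : Ω ≃ Ω') (f : Ω' → ℝ) :
    uE (fun x => f (e x)) = uE f := by
  unfold uE
  rw [Fintype.card_congr e, Equiv.sum_comp e f]

lemma uE_prod {Ω Ω' : Type*} [Fintype Ω] [Fintype Ω'] (f : Ω × Ω' → ℝ) :
    uE f = uE (fun a => uE (fun b => f (a, b))) := by
  unfold uE
  rw [Fintype.sum_prod_type, Fintype.card_prod, ← Finset.sum_div, div_div]
  push_cast
  rw [mul_comm]

lemma uP_mono {Ω : Type*} [Fintype Ω] {A B : Set Ω} (h : A ⊆ B) : unifProb A ≤ unifProb B := by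
  rw [unifProb_eq, unifProb_eq]
  apply uE_mono
  intro x
  by_cases hx : x ∈ A
  · simp [hx, h hx]
  · simp only [hx, if_false]; split_ifs <;> norm_num

lemma uP_nonneg {Ω : Type*} [Fintype Ω] (A : Set Ω) : 0 ≤ unifProb A := by
  unfold unifProb; positivity

lemma uP_univ {Ω : Type*} [Fintype Ω] [Nonempty Ω] : unifProb (Set.univ : Set Ω) = 1 := by
  rw [unifProb_eq]; simp [uE_const]

lemma uP_le_one {Ω : Type*} [Fintype Ω] (A : Set Ω) : unifProb A ≤ 1 := by
  rcases isEmpty_or_nonempty Ω with h | h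
  · simp [unifProb]
  · rw [← uP_univ (Ω := Ω)]; exact uP_mono (Set.subset_univ _)

lemma uP_compl {Ω : Type*} [Fintype Ω] [Nonempty Ω] (A : Set Ω) :
    unifProb A = 1 - unifProb Aᶜ := by
  have : unifProb A + unifProb Aᶜ = 1 := by
    rw [unifProb_eq, unifProb_eq, ← uE_add, ← uE_const (Ω := Ω) 1]
    congr 1
    ext x
    rw [uE_const]
    by_cases hx : x ∈ A <;> simp [hx]
  linarith

lemma uP_union {Ω : Type*} [Fintype Ω] (A B : Set Ω) :
    unifProb (A ∪ B) ≤ unifProb A + unifProb B := by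
  rw [unifProb_eq, unifProb_eq, unifProb_eq, ← uE_add]
  apply uE_mono
  intro x
  by_cases hx : x ∈ A <;> by_cases hy : x ∈ B <;> simp [hx, hy]

lemma uP_exists {Ω ι : Type*} [Fintype Ω] [Fintype ι] (A : ι → Set Ω) :
    unifProb {x | ∃ i, x ∈ A i} ≤ ∑ i, unifProb (A i) := by
  simp only [unifProb_eq]
  rw [← uE_sum]
  apply uE_mono
  intro x
  have h0 : ∀ i ∈ Finset.univ, (0 : ℝ) ≤ if x ∈ A i then (1 : ℝ) else 0 := by
    intro i _; split_ifs <;> norm_num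
  by_cases hx : ∃ i, x ∈ A i
  · obtain ⟨i, hi⟩ := hx
    have := Finset.single_le_sum h0 (Finset.mem_univ i)
    have h1 : x ∈ {x | ∃ i, x ∈ A i} := ⟨i, hi⟩
    simpa only [h1, hi, if_true] using this
  · have h1 : x ∉ {x | ∃ i, x ∈ A i} := hx
    simpa only [h1, if_false] using Finset.sum_nonneg h0

lemma uP_exists_le {Ω ι : Type*} [Fintype Ω] [Fintype ι] (A : ι → Set Ω) (δ : ℝ)
    (h : ∀ i, unifProb (A i) ≤ δ) :
    unifProb {x | ∃ i, x ∈ A i} ≤ Fintype.card ι * δ := by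
  refine (uP_exists A).trans ((Finset.sum_le_sum fun i _ => h i).trans ?_)
  simp

lemma uP_prod {Ω Ω' : Type*} [Fintype Ω] [Fintype Ω'] (A : Set (Ω × Ω')) :
    unifProb A = uE (fun a => unifProb {b | (a, b) ∈ A}) := by
  simp only [unifProb_eq]
  rw [uE_prod]
  rfl

lemma uP_prod_le {Ω Ω' : Type*} [Fintype Ω] [Fintype Ω'] [Nonempty Ω] (A : Set (Ω × Ω'))
    (G : Set Ω) (δ : ℝ) (hδ : 0 ≤ δ) (h : ∀ a ∈ G, unifProb {b | (a, b) ∈ A} ≤ δ) :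
    unifProb A ≤ unifProb Gᶜ + δ := by
  rw [uP_prod, unifProb_eq Gᶜ, ← uE_const (Ω := Ω) δ, ← uE_add]
  apply uE_mono
  intro a
  by_cases ha : a ∈ G
  · simp [ha, h a ha, uE_const]
  · have := uP_le_one {b | (a, b) ∈ A}
    simp [ha, uE_const]; linarith

lemma uP_equiv {Ω Ω' : Type*} [Fintype Ω] [Fintype Ω'] (e : Ω ≃ Ω') (A : Set Ω') :
    unifProb {x | e x ∈ A} = unifProb A := by
  simp only [unifProb_eq]
  exact uE_equiv e (fun x => if x ∈ A then (1 : ℝ) else 0)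

lemma uP_markov {Ω : Type*} [Fintype Ω] (f : Ω → ℝ) (hf : ∀ x, 0 ≤ f x) (a : ℝ) (ha : 0 < a) :
    unifProb {x | a ≤ f x} ≤ uE f / a := by
  rw [le_div_iff₀ ha, unifProb_eq, ← uE_mul_right]
  apply uE_mono
  intro x
  by_cases hx : a ≤ f x
  · simpa [hx] using hx
  · simp [hx, hf x]

lemma uE_pi {ι Ω : Type*} [Fintype ι] [DecidableEq ι] [Fintype Ω] (g : ι → Ω → ℝ) :
    uE (fun ρ : ι → Ω => ∏ t, g t (ρ t)) = ∏ t, uE (g t) := by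
  unfold uE
  rw [Finset.prod_div_distrib, Finset.prod_univ_sum, Fintype.piFinset_univ]
  simp

lemma uP_pi {ι Ω : Type*} [Fintype ι] [DecidableEq ι] [Fintype Ω] (s : ι → Set Ω) :
    unifProb {ρ : ι → Ω | ∀ t, ρ t ∈ s t} = ∏ t, unifProb (s t) := by
  simp only [unifProb_eq]
  rw [← uE_pi]
  congr 1
  ext ρ
  simp only [Set.mem_ofPred_eq]
  rw [Finset.prod_ite_zero]
  simp

lemma uP_finset {Ω : Type*} [Fintype Ω] (S : Finset Ω) :
    unifProb (S : Set Ω) = S.card / Fintype.card Ω := by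
  unfold unifProb
  simp

/-! ### Occupancy counts -/

noncomputable def cnt {ι Ω : Type*} [Fintype ι] (S : Finset Ω) (ρ : ι → Ω) : ℕ :=
  (Finset.univ.filter fun t => ρ t ∈ S).card

/-- exponential moment bound -/
lemma cnt_tail {ι Ω : Type*} [Fintype ι] [DecidableEq ι] [Fintype Ω] [Nonempty Ω] (S : Finset Ω)
    (l : ℝ) (hl : 1 ≤ l) (q : ℝ) (hq : (S.card : ℝ) / Fintype.card Ω ≤ q) (a : ℝ) :
    unifProb {ρ : ι → Ω | a ≤ cnt S ρ} ≤ (1 + (l - 1) * q) ^ Fintype.card ι / l ^ a := by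
  have h1 : uE (fun ρ : ι → Ω => l ^ cnt S ρ) = (1 + (l - 1) * (S.card / Fintype.card Ω)) ^
      Fintype.card ι := by
    have : ∀ ρ : ι → Ω, l ^ cnt S ρ = ∏ t, (if ρ t ∈ S then l else 1) := by
      intro ρ
      rw [Finset.prod_ite]
      simp [cnt]
    simp only [this]
    rw [uE_pi (fun _ x => if x ∈ S then l else 1)]
    simp only [Finset.prod_const, Finset.card_univ]
    congr 1
    rw [← uP_finset, unifProb_eq, ← uE_mul_left, ← uE_const (Ω := Ω) 1, ← uE_add]
    congr 1
    ext x
    by_cases hx : x ∈ S <;> simp [hx, uE_const]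
  have hla : 0 < l ^ a := Real.rpow_pos_of_pos (by linarith) _
  have h2 : unifProb {ρ : ι → Ω | a ≤ cnt S ρ} ≤
      unifProb {ρ : ι → Ω | l ^ a ≤ l ^ cnt S ρ} := by
    apply uP_mono
    intro ρ hρ
    simp only [Set.mem_ofPred_eq] at hρ ⊢
    rw [← Real.rpow_natCast]
    exact Real.rpow_le_rpow_of_exponent_le hl hρ
  refine h2.trans ((uP_markov _ (fun ρ => by positivity) _ hla).trans ?_)
  rw [h1]
  have : (0 : ℝ) ≤ (S.card : ℝ) / Fintype.card Ω := by positivity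
  have hl' : 0 ≤ l - 1 := by linarith
  gcongr

lemma cnt_cons {n : ℕ} {Ω : Type*} (S : Finset Ω) (x : Ω) (ρ : Fin n → Ω) :
    cnt S (Fin.cons x ρ : Fin (n + 1) → Ω) = cnt S ρ + if x ∈ S then 1 else 0 := by
  unfold cnt
  simp only [Finset.card_filter, Fin.sum_univ_succ, Fin.cons_zero, Fin.cons_succ]
  rw [add_comm]

lemma uP_cons {n : ℕ} {Ω : Type*} [Fintype Ω] (A : Set (Fin (n + 1) → Ω)) :
    unifProb A = uE (fun x => unifProb {ρ : Fin n → Ω | (Fin.cons x ρ : Fin (n + 1) → Ω) ∈ A}) := by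
  rw [← uP_equiv (Fin.consEquiv (fun _ => Ω)), uP_prod]
  rfl

lemma uE_three {Ω : Type*} [Fintype Ω] [Nonempty Ω] (S T : Finset Ω) (h : Disjoint S T)
    (a b c : ℝ) :
    uE (fun x => if x ∈ S then a else if x ∈ T then b else c) =
      unifProb (S : Set Ω) * a + unifProb (T : Set Ω) * b +
        (1 - unifProb (S : Set Ω) - unifProb (T : Set Ω)) * c := by
  have : ∀ x, (if x ∈ S then a else if x ∈ T then b else c) =
      (if x ∈ (S : Set Ω) then (1 : ℝ) else 0) * (a - c) +
      ((if x ∈ (T : Set Ω) then (1 : ℝ) else 0) * (b - c) + c) := by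
    intro x
    by_cases hx : x ∈ S
    · have : x ∉ T := Finset.disjoint_left.mp h hx
      simp [hx, this]
    · by_cases hy : x ∈ T <;> simp [hx, hy]
  simp only [this]
  rw [uE_add, uE_add, uE_mul_right, uE_mul_right, uE_const]
  simp only [unifProb_eq]
  ring

lemma cnt_rec {n : ℕ} {Ω : Type*} [Fintype Ω] [Nonempty Ω] (S : Finset Ω) (a : ℕ) :
    unifProb {ρ : Fin (n + 1) → Ω | a + 1 ≤ cnt S ρ} =
      unifProb (S : Set Ω) * unifProb {ρ : Fin n → Ω | a ≤ cnt S ρ} +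
      (1 - unifProb (S : Set Ω)) * unifProb {ρ : Fin n → Ω | a + 1 ≤ cnt S ρ} := by
  rw [uP_cons]
  have := uE_three S ∅ (by simp) (unifProb {ρ : Fin n → Ω | a ≤ cnt S ρ}) 0
    (unifProb {ρ : Fin n → Ω | a + 1 ≤ cnt S ρ})
  simp only [Finset.notMem_empty, if_false, mul_zero, add_zero] at this
  rw [uP_finset ∅] at this
  simp only [Finset.card_empty, Nat.cast_zero, zero_div, sub_zero] at this
  rw [← this]
  congr 1
  ext x
  simp only [Set.mem_ofPred_eq, cnt_cons]
  split_ifs <;> simp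

lemma cnt_zero {n : ℕ} {Ω : Type*} [Fintype Ω] [Nonempty Ω] (S : Finset Ω) :
    unifProb {ρ : Fin n → Ω | 0 ≤ cnt S ρ} = 1 := by
  rw [← uP_univ (Ω := Fin n → Ω)]
  congr 1
  ext; simp

lemma cnt_lower {Ω : Type*} [Fintype Ω] [Nonempty Ω] (S : Finset Ω) (n : ℕ) : ∀ (a : ℕ),
    (n.choose a : ℝ) * unifProb (S : Set Ω) ^ a * (1 - unifProb (S : Set Ω)) ^ n ≤
    unifProb {ρ : Fin n → Ω | a ≤ cnt S ρ} := by
  have hp0 := uP_nonneg (S : Set Ω)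
  have hp1 := uP_le_one (S : Set Ω)
  set p := unifProb (S : Set Ω) with hp
  have hq : 0 ≤ 1 - p := by linarith
  induction n with
  | zero =>
    intro a
    rcases a with _ | a
    · rw [cnt_zero]; simp
    · simp [uP_nonneg]
  | succ n ih =>
    intro a
    rcases a with _ | a
    · rw [cnt_zero]
      simp only [Nat.choose_zero_right, Nat.cast_one, pow_zero, one_mul]
      exact pow_le_one₀ hq (by linarith)
    · rw [cnt_rec, Nat.choose_succ_succ, ← hp]
      have h1 := mul_le_mul_of_nonneg_left (ih a) hp0
      have h2 := mul_le_mul_of_nonneg_left (ih (a + 1)) hq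
      push_cast
      refine le_trans ?_ (add_le_add h1 h2)
      have h3 : 0 ≤ (n.choose a : ℝ) * p ^ (a + 1) * (1 - p) ^ n := by positivity
      have h4 : (n.choose a : ℝ) * p ^ (a + 1) * (1 - p) ^ n * (1 - p) ≤
        (n.choose a : ℝ) * p ^ (a + 1) * (1 - p) ^ n := by nlinarith
      calc _ = (n.choose a : ℝ) * p ^ (a + 1) * (1 - p) ^ n * (1 - p) +
            (1 - p) * ((n.choose (a + 1) : ℝ) * p ^ (a + 1) * (1 - p) ^ n) := by ring
        _ ≤ (n.choose a : ℝ) * p ^ (a + 1) * (1 - p) ^ n  +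
            (1 - p) * ((n.choose (a + 1) : ℝ) * p ^ (a + 1) * (1 - p) ^ n) := by linarith
        _ = _ := by ring

lemma cnt_anti {n : ℕ} {Ω : Type*} [Fintype Ω] (S : Finset Ω) (a : ℕ) :
    unifProb {ρ : Fin n → Ω | a + 1 ≤ cnt S ρ} ≤ unifProb {ρ : Fin n → Ω | a ≤ cnt S ρ} := by
  apply uP_mono
  intro ρ h
  simp only [Set.mem_ofPred_eq] at h ⊢
  omega

lemma cnt_joint_rec {n : ℕ} {Ω : Type*} [Fintype Ω] [Nonempty Ω] (S T : Finset Ω)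
    (h : Disjoint S T) (a b : ℕ) :
    unifProb {ρ : Fin (n + 1) → Ω | a + 1 ≤ cnt S ρ ∧ b + 1 ≤ cnt T ρ} =
      unifProb (S : Set Ω) * unifProb {ρ : Fin n → Ω | a ≤ cnt S ρ ∧ b + 1 ≤ cnt T ρ} +
      unifProb (T : Set Ω) * unifProb {ρ : Fin n → Ω | a + 1 ≤ cnt S ρ ∧ b ≤ cnt T ρ} +
      (1 - unifProb (S : Set Ω) - unifProb (T : Set Ω)) *
        unifProb {ρ : Fin n → Ω | a + 1 ≤ cnt S ρ ∧ b + 1 ≤ cnt T ρ} := by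
  rw [uP_cons, ← uE_three S T h]
  congr 1
  ext x
  simp only [Set.mem_ofPred_eq, cnt_cons]
  by_cases hx : x ∈ S
  · have : x ∉ T := Finset.disjoint_left.mp h hx
    simp [hx, this]
  · by_cases hy : x ∈ T <;> simp [hx, hy]

lemma cnt_joint {Ω : Type*} [Fintype Ω] [Nonempty Ω] (S T : Finset Ω) (h : Disjoint S T)
    (n : ℕ) : ∀ a b : ℕ,
    unifProb {ρ : Fin n → Ω | a ≤ cnt S ρ ∧ b ≤ cnt T ρ} ≤
      unifProb {ρ : Fin n → Ω | a ≤ cnt S ρ} * unifProb {ρ : Fin n → Ω | b ≤ cnt T ρ} := by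
  have hst : unifProb (S : Set Ω) + unifProb (T : Set Ω) ≤ 1 := by
    have := uE_three S T h 1 1 0
    rw [mul_one, mul_one, mul_zero, add_zero] at this
    rw [← this, ← uE_const (Ω := Ω) 1]
    apply uE_mono
    intro x
    rw [uE_const]
    split_ifs <;> norm_num
  induction n with
  | zero =>
    intro a b
    rcases a with _ | a
    · rw [cnt_zero, one_mul]; exact uP_mono fun ρ hρ => hρ.2
    · have : {ρ : Fin 0 → Ω | a + 1 ≤ cnt S ρ ∧ b ≤ cnt T ρ} = ∅ := by
        ext ρ; simp [cnt]
      rw [this]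
      refine le_trans (le_of_eq ?_) (mul_nonneg (uP_nonneg _) (uP_nonneg _))
      simp [unifProb]
  | succ n ih =>
    intro a b
    rcases a with _ | a
    · rw [cnt_zero, one_mul]; exact uP_mono fun ρ hρ => hρ.2
    rcases b with _ | b
    · rw [cnt_zero, mul_one]; exact uP_mono fun ρ hρ => hρ.1
    rw [cnt_joint_rec S T h, cnt_rec, cnt_rec]
    have hp0 := uP_nonneg (S : Set Ω)
    have hq0 := uP_nonneg (T : Set Ω)
    have h1 := mul_le_mul_of_nonneg_left (ih a (b + 1)) hp0
    have h2 := mul_le_mul_of_nonneg_left (ih (a + 1) b) hq0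
    have h3 := mul_le_mul_of_nonneg_left (ih (a + 1) (b + 1))
      (show 0 ≤ 1 - unifProb (S : Set Ω) - unifProb (T : Set Ω) by linarith)
    have h4 := mul_nonneg (mul_nonneg hp0 hq0) (mul_nonneg (sub_nonneg.2 (cnt_anti (n := n) S a))
      (sub_nonneg.2 (cnt_anti (n := n) T b)))
    refine (add_le_add (add_le_add h1 h2) h3).trans ?_
    nlinarith [h4]

/-- second moment: with disjoint bins, the chance that no bin gets `k` balls. -/
lemma no_heavy_bin {Ω ι : Type*} [Fintype Ω] [Nonempty Ω] (I : Finset ι) (S : ι → Finset Ω)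
    (hd : ∀ i ∈ I, ∀ j ∈ I, i ≠ j → Disjoint (S i) (S j)) (n k : ℕ) (μ : ℝ) (hμ : 0 < μ)
    (hμI : ∑ i ∈ I, unifProb {ρ : Fin n → Ω | k ≤ cnt (S i) ρ} ≥ μ) :
    unifProb {ρ : Fin n → Ω | ∀ i ∈ I, cnt (S i) ρ < k} ≤ 1 / μ := by
  obtain ⟨A, hA⟩ : ∃ A : ι → Set (Fin n → Ω), A = fun i => {ρ | k ≤ cnt (S i) ρ} := ⟨_, rfl⟩
  obtain ⟨ν, hν⟩ : ∃ ν, ν = ∑ i ∈ I, unifProb (A i) := ⟨_, rfl⟩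
  set X : (Fin n → Ω) → ℝ := fun ρ => ∑ i ∈ I, if ρ ∈ A i then (1 : ℝ) else 0 with hX
  have hνμ : μ ≤ ν := by rw [hν, hA]; exact hμI
  have hν0 : 0 < ν := lt_of_lt_of_le hμ hνμ
  have hEX : uE X = ν := by
    rw [hX, uE_sum]
    simp only [hν, unifProb_eq]
  have hEX2 : uE (fun ρ => X ρ * X ρ) ≤ ν * ν + ν := by
    have e1 : ∀ ρ, X ρ * X ρ = ∑ i ∈ I, ∑ j ∈ I, (if ρ ∈ A i ∩ A j then (1 : ℝ) else 0) := by
      intro ρ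
      rw [hX, Finset.sum_mul_sum]
      refine Finset.sum_congr rfl fun i _ => Finset.sum_congr rfl fun j _ => ?_
      by_cases h1 : ρ ∈ A i <;> by_cases h2 : ρ ∈ A j <;> simp [h1, h2]
    simp only [e1]
    rw [uE_sum]
    simp only [uE_sum]
    have e2 : ∀ i ∈ I, ∀ j ∈ I, uE (fun ρ => if ρ ∈ A i ∩ A j then (1 : ℝ) else 0) ≤
        unifProb (A i) * unifProb (A j) + if i = j then unifProb (A i) else 0 := by
      intro i hi j hj
      have e3 : uE (fun ρ => if ρ ∈ A i ∩ A j then (1 : ℝ) else 0) = unifProb (A i ∩ A j) := by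
        rw [unifProb_eq]
        congr!
      rw [e3]
      by_cases hij : i = j
      · subst hij
        have := mul_nonneg (uP_nonneg (A i)) (uP_nonneg (A i))
        simp only [Set.inter_self, if_true]
        linarith
      · rw [if_neg hij, add_zero]
        rw [hA]
        exact cnt_joint (S i) (S j) (hd i hi j hj hij) n k k
    refine (Finset.sum_le_sum fun i hi => Finset.sum_le_sum fun j hj => e2 i hi j hj).trans ?_
    simp only [Finset.sum_add_distrib]
    rw [← Finset.sum_mul_sum, ← hν]
    apply add_le_add le_rfl
    apply le_of_eq
    rw [hν]
    refine Finset.sum_congr rfl fun i hi => ?_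
    rw [Finset.sum_ite_eq]
    simp [hi]
  have hVar : uE (fun ρ => (X ρ - ν) * (X ρ - ν)) ≤ ν := by
    have : ∀ ρ, (X ρ - ν) * (X ρ - ν) = X ρ * X ρ + ((-2 * ν) * X ρ + ν * ν) := by
      intro ρ; ring
    simp only [this]
    rw [uE_add, uE_add, uE_mul_left, uE_const, hEX]
    linarith
  have h1 := uP_markov (fun ρ => (X ρ - ν) * (X ρ - ν)) (fun ρ => mul_self_nonneg _) (ν * ν)
    (by positivity)
  have h2 : unifProb {ρ : Fin n → Ω | ∀ i ∈ I, cnt (S i) ρ < k} ≤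
      unifProb {ρ | ν * ν ≤ (X ρ - ν) * (X ρ - ν)} := by
    apply uP_mono
    intro ρ hρ
    have : X ρ = 0 := by
      apply Finset.sum_eq_zero
      intro i hi
      have := hρ i hi
      simp only [hA, Set.mem_ofPred_eq]
      rw [if_neg (by omega)]
    simp only [Set.mem_ofPred_eq, this]
    linarith
  refine h2.trans (h1.trans ?_)
  calc _ ≤ ν / (ν * ν) := div_le_div_of_nonneg_right hVar (by positivity)
    _ = 1 / ν := by field_simp
    _ ≤ 1 / μ := by gcongr

/-! ### Torus geometry -/

lemma cdist_eq {m : ℕ} (a b : Fin m) :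
    cdist a b = if a.val ≤ b.val then min (b.val - a.val) (m - (b.val - a.val))
      else min (a.val - b.val) (m - (a.val - b.val)) := by
  have ha := a.isLt
  have hb := b.isLt
  unfold cdist
  rcases lt_trichotomy a.val b.val with h | h | h
  · have h1 : (a.val + m - b.val) % m = m - (b.val - a.val) := by
      rw [Nat.mod_eq_of_lt (by omega)]; omega
    have h2 : (b.val + m - a.val) % m = b.val - a.val := by
      have : b.val + m - a.val = (b.val - a.val) + m := by omega
      rw [this, Nat.add_mod_right, Nat.mod_eq_of_lt (by omega)]
    rw [h1, h2, if_pos h.le, min_comm]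
  · simp [h]
  · have h1 : (b.val + m - a.val) % m = m - (a.val - b.val) := by
      rw [Nat.mod_eq_of_lt (by omega)]; omega
    have h2 : (a.val + m - b.val) % m = a.val - b.val := by
      have : a.val + m - b.val = (a.val - b.val) + m := by omega
      rw [this, Nat.add_mod_right, Nat.mod_eq_of_lt (by omega)]
    rw [h1, h2, if_neg (by omega)]

lemma cdist_comm {m : ℕ} (a b : Fin m) : cdist a b = cdist b a := by
  unfold cdist; rw [min_comm]

lemma cdist_tri {m : ℕ} (a b c : Fin m) : cdist a c ≤ cdist a b + cdist b c := by
  have ha := a.isLt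
  have hb := b.isLt
  have hc := c.isLt
  simp only [cdist_eq]
  split_ifs <;> omega

lemma torusDist_comm {m : ℕ} (a b : Node m) : torusDist a b = torusDist b a := by
  unfold torusDist; rw [cdist_comm a.1, cdist_comm a.2]

lemma torusDist_tri {m : ℕ} (a b c : Node m) : torusDist a c ≤ torusDist a b + torusDist b c := by
  unfold torusDist
  have h1 := cdist_tri a.1 b.1 c.1
  have h2 := cdist_tri a.2 b.2 c.2
  omega

lemma cball_upper {m : ℕ} (a : Fin m) (r : ℕ) :
    (Finset.univ.filter fun b : Fin m => cdist a b ≤ r).card ≤ 2 * r + 1 := by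
  have ha := a.isLt
  by_cases hr : m ≤ 2 * r + 1
  · refine (Finset.card_filter_le _ _).trans ?_
    simpa using hr
  · have hsub : (Finset.univ.filter fun b : Fin m => cdist a b ≤ r) ⊆
        (Finset.range (2 * r + 1)).image
          (fun k => (⟨(a.val + m + k - r) % m, Nat.mod_lt _ (by omega)⟩ : Fin m)) := by
      intro b hb
      have hb' := b.isLt
      simp only [Finset.mem_filter, Finset.mem_univ, true_and, cdist_eq] at hb
      simp only [Finset.mem_image, Finset.mem_range]
      by_cases hab : a.val ≤ b.val
      · rw [if_pos hab] at hb
        by_cases h2 : b.val - a.val ≤ r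
        · refine ⟨b.val - a.val + r, by omega, ?_⟩
          apply Fin.ext
          have : a.val + m + (b.val - a.val + r) - r = b.val + m := by omega
          simp only [this, Nat.add_mod_right, Nat.mod_eq_of_lt hb']
        · refine ⟨b.val - a.val + r - m, by omega, ?_⟩
          apply Fin.ext
          have : a.val + m + (b.val - a.val + r - m) - r = b.val := by omega
          simp only [this, Nat.mod_eq_of_lt hb']
      · rw [if_neg hab] at hb
        by_cases h2 : a.val - b.val ≤ r
        · refine ⟨r - (a.val - b.val), by omega, ?_⟩
          apply Fin.ext
          have : a.val + m + (r - (a.val - b.val)) - r = b.val + m := by omega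
          simp only [this, Nat.add_mod_right, Nat.mod_eq_of_lt hb']
        · refine ⟨r + (m - (a.val - b.val)), by omega, ?_⟩
          apply Fin.ext
          have : a.val + m + (r + (m - (a.val - b.val))) - r = b.val + m + m := by omega
          simp only [this, Nat.add_mod_right, Nat.mod_eq_of_lt hb']
    refine (Finset.card_le_card hsub).trans (Finset.card_image_le.trans ?_)
    simp

lemma cball_lower {m : ℕ} (a : Fin m) (r : ℕ) (hr : r < m) :
    r + 1 ≤ (Finset.univ.filter fun b : Fin m => cdist a b ≤ r).card := by
  have ha := a.isLt
  have hm : 0 < m := by omega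
  let f : ℕ → Fin m := fun k => if h : a.val + k < m then ⟨a.val + k, h⟩ else
    ⟨(a.val + k - m) % m, Nat.mod_lt _ hm⟩
  have hf : ∀ k ≤ r, (f k).val = if a.val + k < m then a.val + k else a.val + k - m := by
    intro k hk
    by_cases h : a.val + k < m
    · simp [f, h]
    · simp only [f, h, dif_neg, not_false_eq_true, if_false]
      exact Nat.mod_eq_of_lt (by omega)
  have h := Finset.card_le_card_of_injOn (s := Finset.range (r + 1))
    (t := Finset.univ.filter fun b : Fin m => cdist a b ≤ r) f ?_ ?_
  · simpa using h
  · intro k hk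
    have hk' : k ≤ r := by simp at hk; omega
    simp only [Finset.coe_filter, Finset.mem_univ, true_and, Set.mem_ofPred_eq, cdist_eq, hf k hk']
    split_ifs <;> omega
  · intro k hk l hl hkl
    have hk' : k ≤ r := by simp at hk; omega
    have hl' : l ≤ r := by simp at hl; omega
    have := congrArg Fin.val hkl
    rw [hf k hk', hf l hl'] at this
    split_ifs at this <;> omega

noncomputable def tball {m : ℕ} (v : Node m) (r : ℕ) : Finset (Node m) :=
  Finset.univ.filter fun u => torusDist v u ≤ r

lemma mem_tball {m : ℕ} (v u : Node m) (r : ℕ) : u ∈ tball v r ↔ torusDist v u ≤ r := by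
  simp [tball]

lemma tball_upper {m : ℕ} (v : Node m) (r : ℕ) : (tball v r).card ≤ (2 * r + 1) ^ 2 := by
  have hsub : tball v r ⊆ (Finset.univ.filter fun b : Fin m => cdist v.1 b ≤ r) ×ˢ
      (Finset.univ.filter fun b : Fin m => cdist v.2 b ≤ r) := by
    intro u hu
    rw [mem_tball] at hu
    unfold torusDist at hu
    simp only [Finset.mem_product, Finset.mem_filter, Finset.mem_univ, true_and]
    omega
  refine (Finset.card_le_card hsub).trans ?_
  rw [Finset.card_product, sq]
  exact Nat.mul_le_mul (cball_upper _ _) (cball_upper _ _)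

lemma tball_lower {m : ℕ} (v : Node m) (r : ℕ) (hr : r < m) :
    (r + 1) ^ 2 ≤ (tball v (2 * r)).card := by
  have hsub : (Finset.univ.filter fun b : Fin m => cdist v.1 b ≤ r) ×ˢ
      (Finset.univ.filter fun b : Fin m => cdist v.2 b ≤ r) ⊆ tball v (2 * r) := by
    intro u hu
    rw [mem_tball]
    unfold torusDist
    simp only [Finset.mem_product, Finset.mem_filter, Finset.mem_univ, true_and] at hu
    omega
  refine le_trans ?_ (Finset.card_le_card hsub)
  rw [Finset.card_product, sq]
  exact Nat.mul_le_mul (cball_lower _ _ hr) (cball_lower _ _ hr)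

/-! ### Placement events -/

lemma uP_empty {Ω : Type*} [Fintype Ω] : unifProb (∅ : Set Ω) = 0 := by
  simp [unifProb]

lemma no_cover {m M K : ℕ} (hK : 0 < K) (S : Finset (Node m)) (j : Fin K) :
    unifProb {ω : Placement m M K | ∀ u ∈ S, ¬ cached ω u j} ≤
      Real.exp (-((M : ℝ) * S.card / K)) := by
  have : NeZero K := ⟨hK.ne'⟩
  have hKr : (0 : ℝ) < K := by exact_mod_cast hK
  have e1 : {ω : Placement m M K | ∀ u ∈ S, ¬ cached ω u j} =
      {ω : Placement m M K | ∀ u, ω u ∈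
        (if u ∈ S then {x : Fin M → Fin K | ∀ i, x i ∈ ({j}ᶜ : Set (Fin K))} else Set.univ)} := by
    ext ω
    simp only [Set.mem_ofPred_eq]
    refine forall_congr' fun u => ?_
    by_cases hu : u ∈ S <;> simp [hu, cached]
  have e2 : unifProb ({j}ᶜ : Set (Fin K)) = 1 - 1 / K := by
    have h1 := uP_compl ({j}ᶜ : Set (Fin K))
    have h2 := uP_finset ({j} : Finset (Fin K))
    simp only [Finset.coe_singleton, Finset.card_singleton, Fintype.card_fin, Nat.cast_one] at h2
    rw [compl_compl, h2] at h1
    exact h1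
  have e3 : unifProb {x : Fin M → Fin K | ∀ i, x i ∈ ({j}ᶜ : Set (Fin K))} = (1 - 1 / (K : ℝ)) ^ M := by
    rw [uP_pi (fun _ : Fin M => ({j}ᶜ : Set (Fin K)))]
    simp [e2]
  have e4 : unifProb {ω : Placement m M K | ∀ u ∈ S, ¬ cached ω u j} =
      ((1 - 1 / (K : ℝ)) ^ M) ^ S.card := by
    rw [e1, uP_pi]
    have : ∀ u, unifProb (if u ∈ S then {x : Fin M → Fin K | ∀ i, x i ∈ ({j}ᶜ : Set (Fin K))}
        else Set.univ) = if u ∈ S then (1 - 1 / (K : ℝ)) ^ M else 1 := by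
      intro u
      by_cases hu : u ∈ S
      · simp only [hu, if_true, e3]
      · simp only [hu, if_false, uP_univ]
    simp only [this]
    rw [Finset.prod_ite]
    simp
  rw [e4, ← pow_mul]
  have h1 : (1 - 1 / (K : ℝ)) ≤ Real.exp (-(1 / K)) := by
    have := Real.add_one_le_exp (-(1 / (K : ℝ)))
    linarith
  have h0 : 0 ≤ 1 - 1 / (K : ℝ) := by
    have : 1 / (K : ℝ) ≤ 1 := by
      rw [div_le_one hKr]; exact_mod_cast hK
    linarith
  calc _ ≤ Real.exp (-(1 / K)) ^ (M * S.card) := by gcongr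
    _ = _ := by
      rw [← Real.exp_nat_mul]
      congr 1
      push_cast
      ring

lemma noninj {M K : ℕ} (hK : 0 < K) :
    unifProb {x : Fin M → Fin K | ¬ Function.Injective x} ≤ (M : ℝ) ^ 2 / K := by
  have : NeZero K := ⟨hK.ne'⟩
  have hKr : (0 : ℝ) < K := by exact_mod_cast hK
  by_cases hMK : M ≤ K
  · have h1 := uP_compl {x : Fin M → Fin K | Function.Injective x}
    have h2 : unifProb {x : Fin M → Fin K | Function.Injective x} =
        (K.descFactorial M : ℝ) / (K : ℝ) ^ M := by
      unfold unifProb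
      have hc : (Finset.univ.filter fun x : Fin M → Fin K =>
          x ∈ {x : Fin M → Fin K | Function.Injective x}).card = K.descFactorial M := by
        have := Fintype.card_congr (Equiv.subtypeInjectiveEquivEmbedding (Fin M) (Fin K))
        rw [Fintype.card_embedding_eq] at this
        simp only [Fintype.card_fin] at this
        rw [← this, Fintype.card_subtype]
        congr!
      simp only [Fintype.card_fun, Fintype.card_fin, Nat.cast_pow]
      rw [← hc]
      congr!
    have h3 : (K + 1 - M : ℕ) ^ M ≤ K.descFactorial M := Nat.pow_sub_le_descFactorial K M
    have h4 : ((K + 1 - M : ℕ) : ℝ) = K + 1 - M := by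
      rw [Nat.cast_sub (by omega)]; push_cast; ring
    have h5 : ((K : ℝ) + 1 - M) ^ M ≤ K.descFactorial M := by
      rw [← h4]; exact_mod_cast h3
    have hMK' : (M : ℝ) ≤ K := by exact_mod_cast hMK
    have h6 : (1 - (M : ℝ) / K) ^ M ≤ (K.descFactorial M : ℝ) / (K : ℝ) ^ M := by
      rw [le_div_iff₀ (by positivity), ← mul_pow]
      refine le_trans ?_ h5
      have : (1 - (M : ℝ) / K) * K = K - M := by field_simp
      rw [this]
      gcongr
      linarith
    have hd : (M : ℝ) / K ≤ 1 := by rw [div_le_one hKr]; exact hMK'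
    have h7 := one_add_mul_le_pow (a := -((M : ℝ) / K)) (by linarith) M
    have h8 : {x : Fin M → Fin K | ¬ Function.Injective x} =
      {x : Fin M → Fin K | Function.Injective x}ᶜ := rfl
    rw [h8]
    have h9 : 1 + (M : ℝ) * -((M : ℝ) / K) = 1 - (M : ℝ) ^ 2 / K := by ring
    rw [h9] at h7
    have h10 : (1 + -((M : ℝ) / K)) = 1 - (M : ℝ) / K := by ring
    rw [h10] at h7
    linarith
  · refine (uP_le_one _).trans ?_
    rw [le_div_iff₀ hKr, one_mul]
    have h : (K : ℝ) ≤ M := by exact_mod_cast (by omega : K ≤ M)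
    have h1 : (1 : ℝ) ≤ M := by exact_mod_cast (by omega : 1 ≤ M)
    nlinarith

noncomputable def goodFiles {m M K : ℕ} (ω : Placement m M K) (v : Node m) (r : ℕ) :
    Finset (Fin K) :=
  Finset.univ.filter fun j => cached ω v j ∧ ∀ w ∈ tball v r, cached ω w j → w = v

lemma cached_card {m M K : ℕ} (ω : Placement m M K) (v : Node m) :
    (Finset.univ.filter fun j => cached ω v j).card ≤ M := by
  have : (Finset.univ.filter fun j => cached ω v j) = Finset.univ.image (ω v) := by
    ext j
    simp only [Finset.mem_filter, Finset.mem_univ, true_and, Finset.mem_image]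
    rfl
  rw [this]
  exact Finset.card_image_le.trans (by simp)

lemma bad_prob {m M K : ℕ} (hK : 0 < K) (v : Node m) (r : ℕ)
    (hr : 16 * (M * (tball v r).card) ≤ K) :
    unifProb {ω : Placement m M K | 2 * (goodFiles ω v r).card < M} ≤
      (1 / 2 : ℝ) ^ M + (M : ℝ) ^ 2 / K := by
  have : NeZero K := ⟨hK.ne'⟩
  have hKr : (0 : ℝ) < K := by exact_mod_cast hK
  let e := ((Equiv.funSplitAt v (Fin M → Fin K)).trans (Equiv.prodComm _ _)).symm
  rw [← uP_equiv e]
  have hδ : (0 : ℝ) ≤ (1 / 2 : ℝ) ^ M + (M : ℝ) ^ 2 / K := by positivity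
  refine (uP_prod_le _ Set.univ _ hδ ?_).trans (by simp [uP_empty])
  intro y _
  have hev : ∀ x, e (y, x) v = x := by
    intro x; simp [e, Equiv.funSplitAt, Equiv.piSplitAt]
  have hew : ∀ x w (h : w ≠ v), e (y, x) w = y ⟨w, h⟩ := by
    intro x w h; simp [e, Equiv.funSplitAt, Equiv.piSplitAt, h]
  let F : Finset (Fin K) := (tball v r).biUnion fun w =>
    if h : w ≠ v then Finset.univ.image (y ⟨w, h⟩) else ∅
  have hF : F.card ≤ M * (tball v r).card := by
    rw [mul_comm]
    apply Finset.card_biUnion_le_card_mul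
    intro w _
    split_ifs
    · exact Finset.card_image_le.trans (by simp)
    · simp
  have hsub : {x : Fin M → Fin K | (y, x) ∈ {x | e x ∈ {ω : Placement m M K |
      2 * (goodFiles ω v r).card < M}}} ⊆
      {x : Fin M → Fin K | (M : ℝ) / 2 ≤ cnt F x} ∪ {x : Fin M → Fin K | ¬ Function.Injective x} := by
    intro x hx
    by_contra hcon
    simp only [Set.mem_union, Set.mem_ofPred_eq, not_or, not_not, not_le] at hcon hx
    obtain ⟨hc, hinj⟩ := hcon
    have hsub2 : (Finset.univ.filter fun i => x i ∉ F).image x ⊆ goodFiles (e (y, x)) v r := by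
      intro j hj
      simp only [Finset.mem_image, Finset.mem_filter, Finset.mem_univ, true_and] at hj
      obtain ⟨i, hi, rfl⟩ := hj
      simp only [goodFiles, Finset.mem_filter, Finset.mem_univ, true_and]
      refine ⟨⟨i, by rw [hev]⟩, ?_⟩
      intro w hw hcw
      by_contra hne
      apply hi
      obtain ⟨i', hi'⟩ := hcw
      rw [hew x w hne] at hi'
      simp only [F, Finset.mem_biUnion]
      refine ⟨w, hw, ?_⟩
      simp only [hne, ne_eq, not_false_eq_true, dif_pos]
      rw [← hi']
      exact Finset.mem_image_of_mem _ (Finset.mem_univ _)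
    have h1 := Finset.card_le_card hsub2
    rw [Finset.card_image_of_injective _ hinj] at h1
    have h2 := Finset.card_filter_add_card_filter_not (s := (Finset.univ : Finset (Fin M)))
      (fun i => x i ∈ F)
    simp only [Finset.card_univ, Fintype.card_fin] at h2
    have h3 : 2 * cnt F x < M := by
      have : (2 : ℝ) * cnt F x < M := by linarith
      exact_mod_cast this
    have h4 : cnt F x + (Finset.univ.filter fun i => x i ∉ F).card = M := by
      unfold cnt
      convert h2
    omega
  refine (uP_mono hsub).trans ((uP_union _ _).trans (add_le_add ?_ (noninj hK)))
  have hq : (F.card : ℝ) / Fintype.card (Fin K) ≤ 1 / 16 := by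
    rw [Fintype.card_fin, div_le_iff₀ hKr]
    have : (16 : ℝ) * F.card ≤ K := by exact_mod_cast (by omega : 16 * F.card ≤ K)
    linarith
  refine (cnt_tail F 16 (by norm_num) (1 / 16) hq ((M : ℝ) / 2)).trans ?_
  have h4 : (16 : ℝ) ^ ((M : ℝ) / 2) = 4 ^ M := by
    rw [show (16 : ℝ) = 4 ^ (2 : ℝ) by norm_num, ← Real.rpow_mul (by norm_num), ← Real.rpow_natCast]
    congr 1
    ring
  rw [h4, Fintype.card_fin, ← div_pow]
  apply pow_le_pow_left₀ <;> norm_num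

lemma many_good {m M K : ℕ} (hm : 0 < m) (r : ℕ) (η : ℝ)
    (h : ∀ v : Node m, unifProb {ω : Placement m M K | 2 * (goodFiles ω v r).card < M} ≤ η) :
    unifProb {ω : Placement m M K | 2 * (Finset.univ.filter fun v : Node m =>
      M ≤ 2 * (goodFiles ω v r).card).card < m ^ 2} ≤ 2 * η := by
  obtain ⟨A, hA⟩ : ∃ A : Node m → Set (Placement m M K), A = fun v =>
    {ω : Placement m M K | 2 * (goodFiles ω v r).card < M} := ⟨_, rfl⟩
  have hη : ∀ v, unifProb (A v) ≤ η := by intro v; rw [hA]; exact h v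
  have hmr : (0 : ℝ) < (m : ℝ) ^ 2 / 2 := by positivity
  have h1 := uP_markov (fun ω : Placement m M K => ∑ v, if ω ∈ A v then (1 : ℝ) else 0)
    (fun ω => Finset.sum_nonneg fun v _ => by split_ifs <;> norm_num) ((m : ℝ) ^ 2 / 2) hmr
  have h2 : {ω : Placement m M K | 2 * (Finset.univ.filter fun v : Node m =>
      M ≤ 2 * (goodFiles ω v r).card).card < m ^ 2} ⊆
      {ω | (m : ℝ) ^ 2 / 2 ≤ ∑ v, if ω ∈ A v then (1 : ℝ) else 0} := by
    intro ω hω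
    simp only [Set.mem_ofPred_eq] at hω ⊢
    rw [Finset.sum_boole]
    have h3 := Finset.card_filter_add_card_filter_not (s := (Finset.univ : Finset (Node m)))
      (fun v => M ≤ 2 * (goodFiles ω v r).card)
    have h4 : (Finset.univ.filter fun v => ω ∈ A v) =
      (Finset.univ.filter fun v : Node m => ¬ M ≤ 2 * (goodFiles ω v r).card) := by
      ext v; simp [hA]
    rw [h4]
    simp only [Finset.card_univ, Fintype.card_prod, Fintype.card_fin] at h3
    have h5 : m ^ 2 ≤ 2 * (Finset.univ.filter fun v : Node m =>
      ¬ M ≤ 2 * (goodFiles ω v r).card).card := by nlinarith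
    have h6 : (m : ℝ) ^ 2 ≤ 2 * ((Finset.univ.filter fun v : Node m =>
      ¬ M ≤ 2 * (goodFiles ω v r).card).card : ℝ) := by exact_mod_cast h5
    linarith
  refine (uP_mono h2).trans (h1.trans ?_)
  rw [div_le_iff₀ hmr, uE_sum]
  have h7 : ∀ v ∈ (Finset.univ : Finset (Node m)),
      uE (fun ω => if ω ∈ A v then (1 : ℝ) else 0) ≤ η := by
    intro v _
    rw [← unifProb_eq]; exact hη v
  refine (Finset.sum_le_sum h7).trans ?_
  simp only [Finset.sum_const, Finset.card_univ, Fintype.card_prod, Fintype.card_fin, nsmul_eq_mul]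
  push_cast
  apply le_of_eq
  ring

/-! ### Request events -/

def Covers {m M K : ℕ} (ω : Placement m M K) (D : ℕ) : Prop :=
  ∀ u j, ∃ w ∈ tball u D, cached ω w j

lemma exists_valid {m M K n' D : ℕ} (ω : Placement m M K) (hc : Covers ω D)
    (ρ : Fin n' → Node m × Fin K) : ∃ A, validAssign ω ρ A := by
  have : ∀ t, ∃ w, cached ω w (ρ t).2 ∧
      ∀ v, cached ω v (ρ t).2 → torusDist (ρ t).1 w ≤ torusDist (ρ t).1 v := by
    intro t
    obtain ⟨w0, _, hw0⟩ := hc (ρ t).1 (ρ t).2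
    obtain ⟨w, hw, hmin⟩ := Finset.exists_min_image
      (Finset.univ.filter fun w => cached ω w (ρ t).2) (fun w => torusDist (ρ t).1 w)
      ⟨w0, by simpa using hw0⟩
    refine ⟨w, by simpa using hw, fun v hv => hmin v (by simpa using hv)⟩
  choose A hA using this
  exact ⟨A, hA⟩

noncomputable def bigCell {m M K : ℕ} (ω : Placement m M K) (D : ℕ) (v : Node m) :
    Finset (Node m × Fin K) :=
  tball v D ×ˢ (Finset.univ.filter fun j => cached ω v j)

noncomputable def coreCell {m M K : ℕ} (ω : Placement m M K) (r : ℕ) (v : Node m) :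
    Finset (Node m × Fin K) :=
  tball v r ×ˢ goodFiles ω v (2 * r)

lemma load_le_big {m M K n' D : ℕ} (ω : Placement m M K) (hc : Covers ω D)
    (ρ : Fin n' → Node m × Fin K) (A) (hA : validAssign ω ρ A) (v : Node m) :
    (Finset.univ.filter fun t => A t = v).card ≤ cnt (bigCell ω D v) ρ := by
  unfold cnt
  apply Finset.card_le_card
  intro t ht
  simp only [Finset.mem_filter, Finset.mem_univ, true_and] at ht ⊢
  subst ht
  obtain ⟨w, hw, hcw⟩ := hc (ρ t).1 (ρ t).2
  have h1 := (hA t).2 w hcw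
  rw [mem_tball] at hw
  simp only [bigCell, Finset.mem_product, mem_tball, Finset.mem_filter, Finset.mem_univ, true_and]
  refine ⟨?_, (hA t).1⟩
  rw [torusDist_comm]
  omega

lemma core_le_load {m M K n' r : ℕ} (ω : Placement m M K)
    (ρ : Fin n' → Node m × Fin K) (A) (hA : validAssign ω ρ A) (v : Node m) :
    cnt (coreCell ω r v) ρ ≤ (Finset.univ.filter fun t => A t = v).card := by
  unfold cnt
  apply Finset.card_le_card
  intro t ht
  simp only [Finset.mem_filter, Finset.mem_univ, true_and, coreCell, Finset.mem_product,
    mem_tball, goodFiles] at ht ⊢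
  obtain ⟨h1, h2, h3⟩ := ht
  apply h3 _ _ (hA t).1
  have h4 := (hA t).2 v h2
  have h5 := torusDist_tri v (ρ t).1 (A t)
  rw [torusDist_comm (ρ t).1 v] at h4
  omega

lemma core_disj {m M K r : ℕ} (ω : Placement m M K) (v w : Node m) (hvw : v ≠ w) :
    Disjoint (coreCell ω r v) (coreCell ω r w) := by
  rw [Finset.disjoint_left]
  intro x hv hw
  simp only [coreCell, Finset.mem_product, mem_tball, goodFiles, Finset.mem_filter,
    Finset.mem_univ, true_and] at hv hw
  obtain ⟨h1, h2, h3⟩ := hv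
  obtain ⟨h1', h2', h3'⟩ := hw
  apply hvw
  refine (h3 w ?_ h2').symm
  have := torusDist_tri v x.1 w
  rw [torusDist_comm x.1 w] at this
  omega

/-- Everything about the requests, for a fixed good placement. -/
lemma requests {m M K n' D r k : ℕ} (hkn : k ≤ n') (hm : 0 < m) (hK : 0 < K) (ω : Placement m M K)
    (hc : Covers ω D) (a q plo phi : ℝ) (hplo : 0 < plo) (hphi : phi < 1)
    (hq : ∀ v : Node m, ((tball v D).card * M : ℝ) / (m ^ 2 * K) ≤ q)
    (hcore1 : ∀ v : Node m, ((tball v r).card * M : ℝ) / (m ^ 2 * K) ≤ phi)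
    (hcore2 : ∀ v : Node m, plo ≤ ((tball v r).card * (M / 2) : ℝ) / (m ^ 2 * K))
    (hgood : m ^ 2 ≤ 2 * (Finset.univ.filter fun v : Node m =>
      M ≤ 2 * (goodFiles ω v (2 * r)).card).card) :
    unifProb {ρ : Fin n' → Node m × Fin K | ¬ ((∃ A, validAssign ω ρ A) ∧
      ∀ A, validAssign ω ρ A → k ≤ maxLoad A ∧ (maxLoad A : ℝ) ≤ a)} ≤
      (m : ℝ) ^ 2 * ((1 + (Real.exp 1 - 1) * q) ^ n' / (Real.exp 1) ^ a) +
      1 / ((m : ℝ) ^ 2 / 2 * (n'.choose k * plo ^ k * (1 - phi) ^ n')) := by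
  have : NeZero K := ⟨hK.ne'⟩
  have : NeZero m := ⟨hm.ne'⟩
  have hKr : (0 : ℝ) < K := by exact_mod_cast hK
  have hmr : (0 : ℝ) < m := by exact_mod_cast hm
  have hcard : (Fintype.card (Node m × Fin K) : ℝ) = (m : ℝ) ^ 2 * K := by
    simp [sq]
  set I := Finset.univ.filter fun v : Node m => M ≤ 2 * (goodFiles ω v (2 * r)).card with hI
  have hsub : {ρ : Fin n' → Node m × Fin K | ¬ ((∃ A, validAssign ω ρ A) ∧
      ∀ A, validAssign ω ρ A → k ≤ maxLoad A ∧ (maxLoad A : ℝ) ≤ a)} ⊆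
      {ρ | ∃ v : Node m, ρ ∈ {ρ : Fin n' → Node m × Fin K | a ≤ cnt (bigCell ω D v) ρ}} ∪
      {ρ | ∀ v ∈ I, cnt (coreCell ω r v) ρ < k} := by
    intro ρ hρ
    by_contra hcon
    simp only [Set.mem_union, Set.mem_ofPred_eq, not_or, not_exists, not_le, not_forall,
      not_lt] at hcon
    obtain ⟨h1, v0, _, h2⟩ := hcon
    apply hρ
    refine ⟨exists_valid ω hc ρ, fun A hA => ⟨?_, ?_⟩⟩
    · refine h2.trans ((core_le_load ω ρ A hA v0).trans ?_)
      exact Finset.le_sup (f := fun v : Node m => (Finset.univ.filter fun t => A t = v).card)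
        (Finset.mem_univ v0)
    · obtain ⟨v, _, hv⟩ := Finset.exists_mem_eq_sup (Finset.univ : Finset (Node m))
        ⟨v0, Finset.mem_univ _⟩ (fun v : Node m => (Finset.univ.filter fun t => A t = v).card)
      have h3 : maxLoad A ≤ cnt (bigCell ω D v) ρ := by
        unfold maxLoad
        rw [hv]
        exact load_le_big ω hc ρ A hA v
      have h4 : (maxLoad A : ℝ) ≤ cnt (bigCell ω D v) ρ := by exact_mod_cast h3
      exact h4.trans (h1 v).le
  refine (uP_mono hsub).trans ((uP_union _ _).trans (add_le_add ?_ ?_))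
  · refine (uP_exists_le _ ((1 + (Real.exp 1 - 1) * q) ^ n' / (Real.exp 1) ^ a) ?_).trans ?_
    · intro v
      have := cnt_tail (ι := Fin n') (bigCell ω D v) (Real.exp 1)
        (Real.one_le_exp (by norm_num)) q ?_ a
      · simpa using this
      · rw [hcard]
        refine le_trans ?_ (hq v)
        gcongr
        unfold bigCell
        rw [Finset.card_product]
        push_cast
        gcongr
        exact_mod_cast cached_card ω v
    · apply le_of_eq
      simp [sq]
  · have hphi' : 0 < 1 - phi := by linarith
    have hch : (0 : ℝ) < n'.choose k := by exact_mod_cast Nat.choose_pos hkn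
    apply no_heavy_bin I (fun v => coreCell ω r v) (fun v _ w _ h => core_disj ω v w h)
    · positivity
    · have hb : ∀ v ∈ I, (n'.choose k * plo ^ k * (1 - phi) ^ n' : ℝ) ≤
          unifProb {ρ : Fin n' → Node m × Fin K | k ≤ cnt (coreCell ω r v) ρ} := by
        intro v hv
        refine le_trans ?_ (cnt_lower (coreCell ω r v) n' k)
        have hv' : M ≤ 2 * (goodFiles ω v (2 * r)).card := by simpa [hI] using hv
        have hv2 : (M : ℝ) / 2 ≤ (goodFiles ω v (2 * r)).card := by
          have : (M : ℝ) ≤ 2 * (goodFiles ω v (2 * r)).card := by exact_mod_cast hv'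
          linarith
        have hv3 : (goodFiles ω v (2 * r)).card ≤ M := by
          refine le_trans (Finset.card_le_card ?_) (cached_card ω v)
          intro j hj
          simp only [goodFiles, Finset.mem_filter, Finset.mem_univ, true_and] at hj ⊢
          exact hj.1
        have hp : unifProb (coreCell ω r v : Set (Node m × Fin K)) =
            ((tball v r).card * (goodFiles ω v (2 * r)).card : ℝ) / (m ^ 2 * K) := by
          rw [uP_finset, hcard]
          unfold coreCell
          rw [Finset.card_product]
          push_cast
          rfl
        have hp1 : plo ≤ unifProb (coreCell ω r v : Set (Node m × Fin K)) := by
          rw [hp]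
          refine (hcore2 v).trans ?_
          gcongr
        have hp2 : unifProb (coreCell ω r v : Set (Node m × Fin K)) ≤ phi := by
          rw [hp]
          refine le_trans ?_ (hcore1 v)
          gcongr
        have hp3 := uP_nonneg (coreCell ω r v : Set (Node m × Fin K))
        generalize unifProb (coreCell ω r v : Set (Node m × Fin K)) = pp at hp1 hp2 hp3 ⊢
        gcongr
      refine ge_iff_le.2 (le_trans ?_ (Finset.sum_le_sum hb))
      rw [Finset.sum_const, nsmul_eq_mul]
      have : (m : ℝ) ^ 2 / 2 ≤ I.card := by
        have : (m : ℝ) ^ 2 ≤ 2 * I.card := by exact_mod_cast hgood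
        linarith
      gcongr

/-! ### Assembling -/

lemma main_fixed {m M R ρ0 k : ℕ} (hm : 0 < m) (hM : 0 < M) (hR : R < m) (hρ : ρ0 < m)
    (hk : 2 * k ≤ m ^ 2) (hk0 : 0 < k) (L : ℝ) (hL : Real.exp L = (m : ℝ) ^ 2) (hL0 : 0 ≤ L)
    (H1 : 4 * (m : ℝ) ^ 2 * L ≤ M * ((R : ℝ) + 1) ^ 2)
    (H2 : (4 * (R : ℝ) + 1) ^ 2 * M ≤ 100 * (m : ℝ) ^ 2 * L)
    (H3 : 16 * (M * (8 * ρ0 + 1) ^ 2) ≤ m ^ 2)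
    (H4 : (m : ℝ) ^ 2 ≤ 1296 * (M * ((ρ0 : ℝ) + 1) ^ 2))
    (H5 : 5184 * (k : ℝ) ≤ L ^ 2) (H6 : k * Real.log L ≤ L / 4) (hL1 : 1 ≤ L) :
    unifProb {x : Placement m M (m ^ 2) × (Fin (m ^ 2) → Node m × Fin (m ^ 2)) |
      ¬ ((∃ A, validAssign x.1 x.2 A) ∧
        ∀ A, validAssign x.1 x.2 A → k ≤ maxLoad A ∧ (maxLoad A : ℝ) ≤ 203 * L)} ≤
      Real.exp (-(2 * L)) + 2 * ((1 / 2 : ℝ) ^ M + (M : ℝ) ^ 2 / (m : ℝ) ^ 2) +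
        (Real.exp (-(2 * L)) + 4 * Real.exp (-(L / 2))) := by
  have hn : 0 < m ^ 2 := by positivity
  have : NeZero (m ^ 2) := ⟨hn.ne'⟩
  have : NeZero m := ⟨hm.ne'⟩
  have hmr : (0 : ℝ) < m := by exact_mod_cast hm
  have hMr : (0 : ℝ) < M := by exact_mod_cast hM
  have hkr : (0 : ℝ) < k := by exact_mod_cast hk0
  have hnr : ((m ^ 2 : ℕ) : ℝ) = (m : ℝ) ^ 2 := by push_cast; rfl
  have hn0 : (0 : ℝ) < (m : ℝ) ^ 2 := by positivity
  let G1 : Set (Placement m M (m ^ 2)) := {ω | Covers ω (2 * R)}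
  let G2 : Set (Placement m M (m ^ 2)) := {ω | m ^ 2 ≤ 2 * (Finset.univ.filter fun v : Node m =>
      M ≤ 2 * (goodFiles ω v (2 * (2 * ρ0))).card).card}
  have hreq : (0 : ℝ) ≤ Real.exp (-(2 * L)) + 4 * Real.exp (-(L / 2)) := by positivity
  refine (uP_prod_le _ (G1 ∩ G2) _ hreq ?_).trans (add_le_add ?_ le_rfl)
  · -- requests
    rintro ω ⟨h1, h2⟩
    have hb := requests (n' := m ^ 2) (k := k) (by omega) hm hn ω h1 (203 * L)
      (100 * L / (m : ℝ) ^ 2) (1 / (2592 * (m : ℝ) ^ 2)) (1 / (16 * (m : ℝ) ^ 2))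
      (by positivity) ?_ ?_ ?_ ?_ h2
    · refine hb.trans (add_le_add ?_ ?_)
      · have e1 : (1 + (Real.exp 1 - 1) * (100 * L / (m : ℝ) ^ 2)) ≤
            Real.exp (200 * L / (m : ℝ) ^ 2) := by
          have h3 : Real.exp 1 - 1 ≤ 2 := by
            have := Real.exp_one_lt_d9; linarith
          have h4 : 0 ≤ 100 * L / (m : ℝ) ^ 2 := by positivity
          have h5 := Real.add_one_le_exp (200 * L / (m : ℝ) ^ 2)
          have h6 : 200 * L / (m : ℝ) ^ 2 = 2 * (100 * L / (m : ℝ) ^ 2) := by ring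
          nlinarith
        have e2 : (1 + (Real.exp 1 - 1) * (100 * L / (m : ℝ) ^ 2)) ^ (m ^ 2) ≤
            Real.exp (200 * L) := by
          have h7 : (0 : ℝ) ≤ 1 + (Real.exp 1 - 1) * (100 * L / (m : ℝ) ^ 2) := by
            have : (0 : ℝ) ≤ Real.exp 1 - 1 := by
              have := Real.one_le_exp (x := 1) (by norm_num); linarith
            positivity
          refine (pow_le_pow_left₀ h7 e1 _).trans (le_of_eq ?_)
          rw [← Real.exp_nat_mul, hnr]
          congr 1
          field_simp
        have e3 : Real.exp 1 ^ (203 * L) = Real.exp (203 * L) := by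
          rw [← Real.exp_mul, one_mul]
        rw [e3, ← hL]
        calc _ ≤ Real.exp L * (Real.exp (200 * L) / Real.exp (203 * L)) := by gcongr; rw [hL]; exact e2
          _ = Real.exp (-(2 * L)) := by
            rw [← Real.exp_sub, ← Real.exp_add]; congr 1; ring
      · -- the second-moment bound
        have e1 : (1 / 2 : ℝ) ≤ (1 - 1 / (16 * (m : ℝ) ^ 2)) ^ (m ^ 2) := by
          have hone : (1 : ℝ) ≤ (m : ℝ) ^ 2 := by exact_mod_cast hn
          have hsm : 1 / (16 * (m : ℝ) ^ 2) ≤ 1 := by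
            rw [div_le_one (by positivity)]; linarith
          have h3 := one_add_mul_le_pow (a := -(1 / (16 * (m : ℝ) ^ 2))) (by linarith) (m ^ 2)
          rw [hnr] at h3
          have h4 : 1 + (m : ℝ) ^ 2 * -(1 / (16 * (m : ℝ) ^ 2)) = 15 / 16 := by
            field_simp; norm_num
          rw [h4, ← sub_eq_add_neg] at h3
          linarith
        have e2 : ((m : ℝ) ^ 2 / (2 * k)) ^ k ≤ ((m ^ 2).choose k : ℝ) := by
          have h3 := Nat.pow_le_choose (α := ℝ) k (m ^ 2)
          refine le_trans ?_ h3
          rw [le_div_iff₀ (by positivity)]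
          have h4 : (k.factorial : ℝ) ≤ (k : ℝ) ^ k := by exact_mod_cast Nat.factorial_le_pow k
          have h5 : (m : ℝ) ^ 2 / 2 ≤ ((m ^ 2 + 1 - k : ℕ) : ℝ) := by
            have : m ^ 2 ≤ 2 * (m ^ 2 + 1 - k) := by omega
            have : (m : ℝ) ^ 2 ≤ 2 * ((m ^ 2 + 1 - k : ℕ) : ℝ) := by exact_mod_cast this
            linarith
          calc ((m : ℝ) ^ 2 / (2 * k)) ^ k * (k.factorial : ℝ)
              ≤ ((m : ℝ) ^ 2 / (2 * k)) ^ k * (k : ℝ) ^ k := by gcongr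
            _ = ((m : ℝ) ^ 2 / 2) ^ k := by
              rw [← mul_pow]; congr 1; field_simp
            _ ≤ _ := by gcongr
        have e3 : Real.exp (-(L / 2)) ≤
            ((m ^ 2).choose k : ℝ) * (1 / (2592 * (m : ℝ) ^ 2)) ^ k := by
          calc Real.exp (-(L / 2)) ≤ Real.exp (-(2 * (k * Real.log L))) := by
                apply Real.exp_le_exp.2; linarith
            _ = (1 / L ^ 2) ^ k := by
              have hL' : (0 : ℝ) < L := by linarith
              rw [show -(2 * (k * Real.log L)) = k * (-(2 * Real.log L)) by ring,
                Real.exp_nat_mul]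
              congr 1
              rw [Real.exp_neg, one_div, show 2 * Real.log L = (2 : ℕ) * Real.log L by norm_num,
                Real.exp_nat_mul, Real.exp_log hL']
            _ ≤ (1 / (5184 * k)) ^ k := by gcongr
            _ = ((m : ℝ) ^ 2 / (2 * k)) ^ k * (1 / (2592 * (m : ℝ) ^ 2)) ^ k := by
              rw [← mul_pow]; congr 1; field_simp; norm_num
            _ ≤ _ := by gcongr
        have e4 : Real.exp (L / 2) / 4 ≤ (m : ℝ) ^ 2 / 2 * (((m ^ 2).choose k : ℝ) *
            (1 / (2592 * (m : ℝ) ^ 2)) ^ k * (1 - 1 / (16 * (m : ℝ) ^ 2)) ^ (m ^ 2)) := by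
          calc Real.exp (L / 2) / 4 = Real.exp L / 2 * (Real.exp (-(L / 2)) * (1 / 2)) := by
                have : Real.exp (L / 2) = Real.exp L * Real.exp (-(L / 2)) := by
                  rw [← Real.exp_add]; congr 1; ring
                rw [this]; ring
            _ = (m : ℝ) ^ 2 / 2 * (Real.exp (-(L / 2)) * (1 / 2)) := by rw [hL]
            _ ≤ _ := by gcongr
        calc _ ≤ 1 / (Real.exp (L / 2) / 4) :=
              one_div_le_one_div_of_le (by positivity) e4
          _ = 4 * Real.exp (-(L / 2)) := by rw [Real.exp_neg]; field_simp
    · rw [div_lt_one (by positivity)]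
      have : (1 : ℝ) ≤ (m : ℝ) ^ 2 := by exact_mod_cast hn
      linarith
    · intro v
      rw [hnr]
      have h3 : ((tball v (2 * R)).card : ℝ) ≤ (4 * (R : ℝ) + 1) ^ 2 := by
        have := tball_upper v (2 * R)
        have h4 : ((tball v (2 * R)).card : ℝ) ≤ (2 * (2 * (R : ℝ)) + 1) ^ 2 := by
          exact_mod_cast this
        linarith
      rw [div_le_div_iff₀ (by positivity) (by positivity)]
      have h4 : ((tball v (2 * R)).card : ℝ) * M ≤ 100 * (m : ℝ) ^ 2 * L :=
        (mul_le_mul_of_nonneg_right h3 hMr.le).trans H2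
      nlinarith
    · intro v
      rw [hnr]
      have h3 : 16 * ((tball v (2 * ρ0)).card * M) ≤ m ^ 2 := by
        have h4 := tball_upper v (2 * ρ0)
        have h5 : (2 * (2 * ρ0) + 1) ^ 2 ≤ (8 * ρ0 + 1) ^ 2 :=
          Nat.pow_le_pow_left (by omega) 2
        have h6 := Nat.mul_le_mul_right M (h4.trans h5)
        linarith
      have h3' : 16 * (((tball v (2 * ρ0)).card : ℝ) * M) ≤ (m : ℝ) ^ 2 := by exact_mod_cast h3
      rw [div_le_div_iff₀ (by positivity) (by positivity)]
      nlinarith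
    · intro v
      rw [hnr]
      have h3 : ((ρ0 : ℝ) + 1) ^ 2 ≤ ((tball v (2 * ρ0)).card : ℝ) := by
        exact_mod_cast tball_lower v ρ0 hρ
      have h4 : (m : ℝ) ^ 2 ≤ 2592 * (((tball v (2 * ρ0)).card : ℝ) * (M / 2)) := by
        have := mul_le_mul_of_nonneg_left h3 hMr.le
        linarith
      rw [div_le_div_iff₀ (by positivity) (by positivity)]
      nlinarith
  · -- placement
    rw [Set.compl_inter]
    refine (uP_union _ _).trans (add_le_add ?_ ?_)
    · have hsub : G1ᶜ ⊆ {ω | ∃ uj : Node m × Fin (m ^ 2), ω ∈ {ω : Placement m M (m ^ 2) |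
          ∀ w ∈ tball uj.1 (2 * R), ¬ cached ω w uj.2}} := by
        intro ω hω
        by_contra hcon
        apply hω
        intro u j
        by_contra h
        apply hcon
        refine ⟨(u, j), ?_⟩
        intro w hw hcw
        exact h ⟨w, hw, hcw⟩
      refine (uP_mono hsub).trans ((uP_exists_le _ (Real.exp (-(4 * L))) ?_).trans ?_)
      · intro uj
        refine (no_cover hn _ _).trans ?_
        apply Real.exp_le_exp.2
        rw [neg_le_neg_iff, hnr, le_div_iff₀ hn0]
        have h3 : ((R : ℝ) + 1) ^ 2 ≤ ((tball uj.1 (2 * R)).card : ℝ) := by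
          exact_mod_cast tball_lower uj.1 R hR
        have := mul_le_mul_of_nonneg_left h3 hMr.le
        linarith
      · have : (Fintype.card (Node m × Fin (m ^ 2)) : ℝ) = Real.exp L * Real.exp L := by
          rw [hL]
          simp only [Fintype.card_prod, Fintype.card_fin]
          push_cast
          ring
        rw [this, ← Real.exp_add, ← Real.exp_add]
        apply Real.exp_le_exp.2
        linarith
    · have hcompl : G2ᶜ = {ω : Placement m M (m ^ 2) | 2 * (Finset.univ.filter fun v : Node m =>
        M ≤ 2 * (goodFiles ω v (2 * (2 * ρ0))).card).card < m ^ 2} := by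
        ext ω
        simp [G2]
      rw [hcompl]
      apply many_good hm
      intro v
      have := bad_prob (M := M) hn v (2 * (2 * ρ0)) ?_
      · rw [hnr] at this; exact this
      · have h4 := tball_upper v (2 * (2 * ρ0))
        have h5 : (2 * (2 * (2 * ρ0)) + 1) ^ 2 = (8 * ρ0 + 1) ^ 2 := by ring
        rw [h5] at h4
        have := Nat.mul_le_mul_left M h4
        omega

lemma eventual_facts (α : ℝ) (hα0 : 0 < α) (hα1 : α < 1 / 2) (β : ℝ) (hβ : 0 < β) :
    ∀ᶠ x : ℝ in atTop, 5184 ≤ Real.log x ∧ 1 ≤ Real.log (Real.log x) ∧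
      8 * Real.log (Real.log x) ≤ Real.log x ∧ 4 * Real.log x + 1 ≤ x ^ α ∧
      2592 * x ^ α ≤ x ∧ 16 ≤ x ^ β ∧ 1 ≤ x ∧ 4 * Real.log x ≤ x := by
  have hlog := Real.tendsto_log_atTop
  have e1 := hlog.eventually_ge_atTop 5184
  have e2 := (hlog.comp hlog).eventually_ge_atTop 1
  have l1 : ∀ᶠ x : ℝ in atTop, Real.log x ≤ (1 / 8) * x := by
    have := (Real.isLittleO_log_id_atTop).bound (show (0 : ℝ) < 1 / 8 by norm_num)
    filter_upwards [this, eventually_ge_atTop 1] with x hx h1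
    simp only [id, Real.norm_eq_abs] at hx
    rw [abs_of_nonneg (by linarith : (0 : ℝ) ≤ x)] at hx
    exact (le_abs_self _).trans hx
  have e3 := hlog.eventually l1
  have e4 : ∀ᶠ x : ℝ in atTop, Real.log x ≤ (1 / 8) * x ^ α := by
    have := (isLittleO_log_rpow_atTop hα0).bound (show (0 : ℝ) < 1 / 8 by norm_num)
    filter_upwards [this, eventually_ge_atTop 1] with x hx h1
    simp only [Real.norm_eq_abs] at hx
    rw [abs_of_nonneg (by positivity : (0 : ℝ) ≤ x ^ α)] at hx
    exact (le_abs_self _).trans hx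
  have e5 := (tendsto_rpow_atTop hα0).eventually_ge_atTop 2
  have e6 := (tendsto_rpow_atTop (show 0 < 1 - α by linarith)).eventually_ge_atTop 2592
  have e7 := (tendsto_rpow_atTop hβ).eventually_ge_atTop 16
  filter_upwards [e1, e2, e3, e4, e5, e6, e7, eventually_ge_atTop 1, l1] with x h1 h2 h3 h4 h5 h6 h7 h8 h9
  refine ⟨h1, h2, by linarith, by linarith, ?_, h7, h8, by linarith⟩
  have hx : x ^ (1 - α) * x ^ α = x := by
    rw [← Real.rpow_add (by linarith)]; simp
  calc 2592 * x ^ α ≤ x ^ (1 - α) * x ^ α := by gcongr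
    _ = x := hx

lemma final_num {α β n L : ℝ} {m M : ℕ} (hn0 : 0 < n) (f7 : 1 ≤ n) (hLdef : L = Real.log n)
    (hL0 : 0 < L) (hnm : n = (m : ℝ) ^ 2) (hML : 4 * L + 1 ≤ M) (hM2 : (M : ℝ) ≤ 2 * n ^ α)
    (hβ : β = min (1 / 2) (1 - 2 * α)) (hβ0 : 0 < β) (f6 : 16 ≤ n ^ (β / 2)) :
    Real.exp (-(2 * L)) + 2 * ((1 / 2 : ℝ) ^ M + (M : ℝ) ^ 2 / (m : ℝ) ^ 2) +
        (Real.exp (-(2 * L)) + 4 * Real.exp (-(L / 2))) ≤ n ^ (-(β / 2)) := by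
  have hexp : ∀ c : ℝ, β ≤ c → Real.exp (-(c * L)) ≤ n ^ (-β) := by
    intro c hc
    rw [Real.rpow_def_of_pos hn0, ← hLdef]
    apply Real.exp_le_exp.2
    nlinarith
  have hb1 : β ≤ 1 / 2 := by rw [hβ]; exact min_le_left _ _
  have hb2 : β ≤ 1 - 2 * α := by rw [hβ]; exact min_le_right _ _
  have g1 := hexp 2 (by linarith)
  have g2 := hexp (1 / 2) hb1
  have g3 : (1 / 2 : ℝ) ^ M ≤ n ^ (-β) := by
    refine le_trans ?_ (hexp 1 (by linarith))
    rw [show (1 / 2 : ℝ) = Real.exp (-Real.log 2) by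
      rw [Real.exp_neg, Real.exp_log (by norm_num)]; norm_num, ← Real.exp_nat_mul]
    apply Real.exp_le_exp.2
    have := Real.log_two_gt_d9
    nlinarith
  have g4 : (M : ℝ) ^ 2 / (m : ℝ) ^ 2 ≤ 4 * n ^ (-β) := by
    rw [← hnm]
    calc (M : ℝ) ^ 2 / n ≤ (2 * n ^ α) ^ 2 / n := by gcongr
      _ = 4 * n ^ (2 * α - 1) := by
        rw [Real.rpow_sub hn0, Real.rpow_one, mul_comm 2 α, Real.rpow_mul hn0.le]
        norm_num [mul_pow]
        ring
      _ ≤ 4 * n ^ (-β) := by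
        gcongr 4 * ?_
        exact Real.rpow_le_rpow_of_exponent_le f7 (by linarith)
  have g5 : 16 * n ^ (-β) ≤ n ^ (-(β / 2)) := by
    calc 16 * n ^ (-β) ≤ n ^ (β / 2) * n ^ (-β) := by gcongr
      _ = n ^ (-(β / 2)) := by rw [← Real.rpow_add hn0]; congr 1; ring
  have g2' : Real.exp (-(L / 2)) ≤ n ^ (-β) := by
    rw [show L / 2 = 1 / 2 * L by ring]; exact g2
  linarith

set_option maxHeartbeats 2000000 in
lemma statement3_aux (α : ℝ) (hα0 : 0 < α) (hα1 : α < 1 / 2) :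
    ∃ c₁ c₂ c : ℝ, 0 < c₁ ∧ 0 < c₂ ∧ 0 < c ∧ ∃ N : ℕ, ∀ m : ℕ, N ≤ m →
      1 - (((m ^ 2 : ℕ) : ℝ)) ^ (-c) ≤
        unifProb {x : Placement m (Mf α (m ^ 2)) (m ^ 2) ×
            (Fin (m ^ 2) → Node m × Fin (m ^ 2)) |
          (∃ A, validAssign x.1 x.2 A) ∧
          ∀ A, validAssign x.1 x.2 A →
            c₁ * Real.log ((m ^ 2 : ℕ) : ℝ) / Real.log (Real.log ((m ^ 2 : ℕ) : ℝ)) ≤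
              (maxLoad A : ℝ) ∧
            (maxLoad A : ℝ) ≤ c₂ * Real.log ((m ^ 2 : ℕ) : ℝ)} := by
  set β : ℝ := min (1 / 2) (1 - 2 * α) with hβ
  have hβ0 : 0 < β := lt_min (by norm_num) (by linarith)
  refine ⟨1 / 8, 203, β / 2, by norm_num, by norm_num, by linarith, ?_⟩
  have hev := eventual_facts α hα0 hα1 (β / 2) (by linarith)
  have ht : Tendsto (fun m : ℕ => ((m ^ 2 : ℕ) : ℝ)) atTop atTop :=
    tendsto_natCast_atTop_atTop.comp (tendsto_pow_atTop (by norm_num))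
  obtain ⟨N, hN⟩ := eventually_atTop.1 (ht.eventually hev)
  refine ⟨N + 1, fun m hmN => ?_⟩
  obtain ⟨f1, f2, f3, f4, f5, f6, f7, f8⟩ := hN m (by omega)
  have hm : 0 < m := by omega
  have : NeZero (m ^ 2) := ⟨by positivity⟩
  have : NeZero m := ⟨hm.ne'⟩
  have hmr : (0 : ℝ) < m := by exact_mod_cast hm
  set n : ℝ := ((m ^ 2 : ℕ) : ℝ) with hn
  have hnm : n = (m : ℝ) ^ 2 := by rw [hn]; push_cast; rfl
  set L := Real.log n with hLdef
  set l := Real.log L with hldef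
  have hn0 : 0 < n := by linarith
  have hL : Real.exp L = (m : ℝ) ^ 2 := by rw [hLdef, Real.exp_log hn0, hnm]
  set M := Mf α (m ^ 2) with hMdef
  have hM1 : n ^ α ≤ M := Nat.le_ceil _
  have hM2 : (M : ℝ) ≤ 2 * n ^ α := by
    have := Nat.ceil_lt_add_one (show 0 ≤ n ^ α by positivity)
    have h : (M : ℝ) < n ^ α + 1 := this
    linarith
  have hMr : (0 : ℝ) < M := by linarith
  have hM : 0 < M := by exact_mod_cast hMr
  have hMn : 1296 * (M : ℝ) ≤ n := by linarith
  -- R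
  set R := ⌊Real.sqrt (4 * n * L / M)⌋₊ with hR
  have hs0 : 0 ≤ 4 * n * L / M := by positivity
  have hR1 : (R : ℝ) ^ 2 ≤ 4 * n * L / M := by
    have := Nat.floor_le (Real.sqrt_nonneg (4 * n * L / M))
    calc (R : ℝ) ^ 2 ≤ Real.sqrt (4 * n * L / M) ^ 2 := by gcongr
      _ = _ := Real.sq_sqrt hs0
  have hR2 : 4 * n * L / M ≤ ((R : ℝ) + 1) ^ 2 := by
    have := (Nat.lt_floor_add_one (Real.sqrt (4 * n * L / M))).le
    calc _ = Real.sqrt (4 * n * L / M) ^ 2 := (Real.sq_sqrt hs0).symm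
      _ ≤ _ := by gcongr
  have hR3 : (1 : ℝ) ≤ R := by
    have : 1 ≤ R := by
      apply Nat.le_floor
      rw [Nat.cast_one, Real.one_le_sqrt, le_div_iff₀ hMr]
      nlinarith
    exact_mod_cast this
  have hRm : R < m := by
    have h1 : (R : ℝ) ^ 2 < (m : ℝ) ^ 2 := by
      refine lt_of_le_of_lt hR1 ?_
      rw [← hnm, div_lt_iff₀ hMr]
      nlinarith
    have := lt_of_pow_lt_pow_left₀ 2 hmr.le h1
    exact_mod_cast this
  -- ρ
  set ρ0 := ⌊Real.sqrt (n / (1296 * M))⌋₊ with hρ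
  have hp0 : 0 ≤ n / (1296 * M) := by positivity
  have hp1 : (ρ0 : ℝ) ^ 2 ≤ n / (1296 * M) := by
    have := Nat.floor_le (Real.sqrt_nonneg (n / (1296 * M)))
    calc (ρ0 : ℝ) ^ 2 ≤ Real.sqrt (n / (1296 * M)) ^ 2 := by gcongr
      _ = _ := Real.sq_sqrt hp0
  have hp2 : n / (1296 * M) ≤ ((ρ0 : ℝ) + 1) ^ 2 := by
    have := (Nat.lt_floor_add_one (Real.sqrt (n / (1296 * M)))).le
    calc _ = Real.sqrt (n / (1296 * M)) ^ 2 := (Real.sq_sqrt hp0).symm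
      _ ≤ _ := by gcongr
  have hp3 : (1 : ℝ) ≤ ρ0 := by
    have : 1 ≤ ρ0 := by
      apply Nat.le_floor
      rw [Nat.cast_one, Real.one_le_sqrt, le_div_iff₀ (by positivity)]
      linarith
    exact_mod_cast this
  have hM1' : (1 : ℝ) ≤ M := by exact_mod_cast hM
  have hρm : ρ0 < m := by
    have h1 : (ρ0 : ℝ) ^ 2 < (m : ℝ) ^ 2 := by
      refine lt_of_le_of_lt hp1 ?_
      rw [← hnm, div_lt_iff₀ (by positivity)]
      nlinarith
    have := lt_of_pow_lt_pow_left₀ 2 hmr.le h1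
    exact_mod_cast this
  -- k
  set k := ⌈(1 / 8) * L / l⌉₊ with hk
  have hl0 : 0 < l := by linarith
  have hL0 : 0 < L := by linarith
  have hk1 : (1 / 8) * L / l ≤ k := Nat.le_ceil _
  have hk2 : (k : ℝ) ≤ L / (4 * l) := by
    have h := (Nat.ceil_lt_add_one (show 0 ≤ (1 / 8) * L / l by positivity)).le
    have h1 : 1 ≤ (1 / 8) * L / l := by rw [le_div_iff₀ hl0]; linarith
    calc (k : ℝ) ≤ (1 / 8) * L / l + (1 / 8) * L / l := by linarith
      _ = _ := by field_simp; norm_num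
  have hk3 : (k : ℝ) ≤ L := by
    refine hk2.trans ?_
    rw [div_le_iff₀ (by positivity)]
    nlinarith
  have hk0 : 0 < k := Nat.ceil_pos.2 (by positivity)
  have hkn : 2 * k ≤ m ^ 2 := by
    have : (2 * k : ℝ) ≤ ((m ^ 2 : ℕ) : ℝ) := by rw [← hn]; linarith
    exact_mod_cast this
  have hfix := main_fixed hm hM hRm hρm hkn hk0 L hL hL0.le ?_ ?_ ?_ ?_ ?_ ?_ (by linarith)
  · rw [uP_compl]
    have hbound : unifProb {x : Placement m M (m ^ 2) × (Fin (m ^ 2) → Node m × Fin (m ^ 2)) |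
          (∃ A, validAssign x.1 x.2 A) ∧
          ∀ A, validAssign x.1 x.2 A → 1 / 8 * L / l ≤ (maxLoad A : ℝ) ∧
            (maxLoad A : ℝ) ≤ 203 * L}ᶜ ≤ n ^ (-(β / 2)) := by
      refine (uP_mono ?_).trans (hfix.trans ?_)
      · intro x hx hcon
        apply hx
        refine ⟨hcon.1, fun A hA => ⟨?_, (hcon.2 A hA).2⟩⟩
        refine hk1.trans ?_
        exact_mod_cast (hcon.2 A hA).1
      · exact final_num hn0 f7 hLdef hL0 hnm (by linarith) hM2 hβ hβ0 f6
    linarith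
  · rw [← hnm]
    rw [div_le_iff₀ hMr] at hR2
    linarith
  · rw [← hnm]
    rw [le_div_iff₀ hMr] at hR1
    have h1 : (4 * (R : ℝ) + 1) ^ 2 ≤ 25 * (R : ℝ) ^ 2 := by nlinarith
    have := mul_le_mul_of_nonneg_right h1 hMr.le
    linarith
  · rw [le_div_iff₀ (by positivity)] at hp1
    have h1 : (8 * (ρ0 : ℝ) + 1) ^ 2 ≤ 81 * (ρ0 : ℝ) ^ 2 := by nlinarith
    have h2 := mul_le_mul_of_nonneg_left h1 hMr.le
    have h3 : 16 * ((M : ℝ) * (8 * (ρ0 : ℝ) + 1) ^ 2) ≤ (m : ℝ) ^ 2 := by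
      rw [← hnm]; linarith
    exact_mod_cast h3
  · rw [← hnm]
    rw [div_le_iff₀ (by positivity)] at hp2
    linarith
  · nlinarith
  · rw [le_div_iff₀ (by positivity)] at hk2
    rw [← hldef]
    linarith

/-- With `K = n`, `M = ⌈n^α⌉` (`0 < α < 1/2` constant) and Uniform
popularity, the maximum load of Strategy I lies in
`[Ω(log n/log log n), O(log n)]` with high probability. -/
theorem statement3 (α : ℝ) (hα0 : 0 < α) (hα1 : α < 1 / 2) :
    ∃ c₁ c₂ c : ℝ, 0 < c₁ ∧ 0 < c₂ ∧ 0 < c ∧ ∃ N : ℕ, ∀ m : ℕ, N ≤ m →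
      1 - (((m ^ 2 : ℕ) : ℝ)) ^ (-c) ≤
        unifProb {x : Placement m (Mf α (m ^ 2)) (m ^ 2) ×
            (Fin (m ^ 2) → Node m × Fin (m ^ 2)) |
          (∃ A, validAssign x.1 x.2 A) ∧
          ∀ A, validAssign x.1 x.2 A →
            c₁ * Real.log ((m ^ 2 : ℕ) : ℝ) / Real.log (Real.log ((m ^ 2 : ℕ) : ℝ)) ≤
              (maxLoad A : ℝ) ∧
            (maxLoad A : ℝ) ≤ c₂ * Real.log ((m ^ 2 : ℕ) : ℝ)} := by
  exact statement3_aux α hα0 hα1
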